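/- arXiv:1807.10954 — 3 statements merged into one kernel-verified Lean document; each statement's English description precedes it below -/
import Mathlib

section
/- For every integer w ≥ 3, there exists a (3w, 5w, w)-domination mapping. -/
/-- Hamming weight of a binary word. -/
def wt {n : ℕ} (y : Fin n → Bool) : ℕ := (Finset.univ.filter fun j => y j = true).card

/-- A domination graph: a bipartite graph on [m] ∪ [n] with no isolated right vertices. -/
def IsDominationGraph (m n : ℕ) (E : Finset (Fin m × Fin n)) : Prop :=
  ∀ j : Fin n, ∃ i : Fin m, (i, j) ∈ E

/-- `x` dominates `y` (with respect to the edge set `E`). -/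
def Dominates {m n : ℕ} (E : Finset (Fin m × Fin n))
    (x : Fin m → Bool) (y : Fin n → Bool) : Prop :=
  ∀ e ∈ E, x e.1 = false → y e.2 = false

/-- `φ` is a `G`-domination mapping: an injective map from {0,1}^m into B(n,w) such that
for every edge (i,j) ∈ E and every x, x_i = 0 implies φ(x)_j = 0. -/
def IsGDominating {m n : ℕ} (E : Finset (Fin m × Fin n)) (w : ℕ)
    (φ : (Fin m → Bool) → (Fin n → Bool)) : Prop :=
  Function.Injective φ ∧ (∀ x, wt (φ x) ≤ w) ∧ ∀ x : Fin m → Bool, Dominates E x (φ x)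

/-- An (m,n,w)-domination mapping: G-dominating for some domination graph G. -/
def IsDominationMapping (m n w : ℕ) (φ : (Fin m → Bool) → (Fin n → Bool)) : Prop :=
  ∃ E : Finset (Fin m × Fin n), IsDominationGraph m n E ∧ IsGDominating E w φ

/-- Existence of an (m,n,w)-domination mapping. -/
def ExistsDomMap (m n w : ℕ) : Prop := ∃ φ, IsDominationMapping m n w φ

/-- Degree of a left vertex `i`. -/
def degLeft {m n : ℕ} (E : Finset (Fin m × Fin n)) (i : Fin m) : ℕ :=
  (E.filter fun e => e.1 = i).card

/-!
Direct sums of domination mappings reduce the theorem to `w = 3, 4, 5`. For these, use `w` left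
vertices of degree one and `2 * w` of degree two. A left word `(X, Y)` is given the type `(#X, #Y)`,
where `X` and `Y` are its degree-one and degree-two vertices; a right word is given the type of the
smallest left word dominating it. By symmetry, domination between two fixed types is biregular,
hence has the normalized matching property. So if each left type `p` is sent to a type `f p ≤ p`,
and at most as many left words are sent to each type `u` as there are right words of type `u` and
weight at most `w`, then Hall's theorem yields the injection.
-/

open Finset Function

section DirectSum

lemma wt_append {n n' : ℕ} (y : Fin n → Bool) (y' : Fin n' → Bool) :
    wt (Fin.append y y') = wt y + wt y' := by
  simp only [wt, card_filter, Fin.sum_univ_add, Fin.append_left, Fin.append_right]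

lemma ExistsDomMap.add {m n w m' n' w' : ℕ} (h : ExistsDomMap m n w)
    (h' : ExistsDomMap m' n' w') : ExistsDomMap (m + m') (n + n') (w + w') := by
  obtain ⟨φ, E, hE, hinj, hwt, hdom⟩ := h
  obtain ⟨φ', E', hE', hinj', hwt', hdom'⟩ := h'
  refine ⟨fun x => Fin.append (φ (x ∘ Fin.castAdd m')) (φ' (x ∘ Fin.natAdd m)),
    E.image (Prod.map (Fin.castAdd m') (Fin.castAdd n')) ∪
      E'.image (Prod.map (Fin.natAdd m) (Fin.natAdd n)), fun j => ?_, fun x y hxy => ?_,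
    fun x => (wt_append _ _).trans_le (add_le_add (hwt _) (hwt' _)), fun x e he hx => ?_⟩
  · cases j using Fin.addCases with
    | left j =>
      obtain ⟨i, hi⟩ := hE j
      exact ⟨Fin.castAdd m' i, mem_union_left _ (mem_image_of_mem _ hi)⟩
    | right j =>
      obtain ⟨i, hi⟩ := hE' j
      exact ⟨Fin.natAdd m i, mem_union_right _ (mem_image_of_mem _ hi)⟩
  · have hleft := hinj (funext fun j => by simpa using congrFun hxy (Fin.castAdd n' j))
    have hright := hinj' (funext fun j => by simpa using congrFun hxy (Fin.natAdd n j))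
    exact funext (Fin.addCases (congrFun hleft) (congrFun hright))
  · rcases mem_union.1 he with he | he
    · obtain ⟨e, heE, rfl⟩ := mem_image.1 he
      simpa using hdom _ e heE hx
    · obtain ⟨e, heE, rfl⟩ := mem_image.1 he
      simpa using hdom' _ e heE hx

end DirectSum

section SetForm

variable {A B : Type*} [Fintype A] [Fintype B]

lemma existsDomMap_of_finset_map {w : ℕ} (p : B → A) {φ : Finset A → Finset B}
    (hinj : Injective φ) (hcard : ∀ X, #(φ X) ≤ w) (hdom : ∀ X, ∀ b ∈ φ X, p b ∈ X) :
    ExistsDomMap (Fintype.card A) (Fintype.card B) w := by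
  classical
  let e := Fintype.equivFin A
  let f := Fintype.equivFin B
  let support (x : Fin (Fintype.card A) → Bool) : Finset A := {a | x (e a)}
  refine ⟨fun x j => decide (f.symm j ∈ φ (support x)),
    univ.image fun b => (e (p b), f b), fun j => ?_, fun x y hxy => ?_, fun x => ?_, ?_⟩
  · exact ⟨e (p (f.symm j)), mem_image.2 ⟨f.symm j, mem_univ _, by simp⟩⟩
  · have hsupport : support x = support y :=
      hinj <| Finset.ext fun b => by
        simpa only [Equiv.symm_apply_apply, decide_eq_decide] using congrFun hxy (f b)
    funext i
    refine Bool.eq_iff_iff.2 ?_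
    simpa [support] using Finset.ext_iff.1 hsupport (e.symm i)
  · refine le_of_eq_of_le ?_ (hcard (support x))
    rw [wt, ← card_map f.toEmbedding]
    congr 1
    ext j
    simp only [decide_eq_true_eq, mem_filter, mem_univ, true_and, mem_map_equiv]
  · rintro x _ he hx
    obtain ⟨b, -, rfl⟩ := mem_image.1 he
    have hb : p b ∉ support x := by simpa [support] using hx
    simpa using mt (hdom (support x) b) hb

end SetForm

section Matching

variable {ι β : Type*} (r : ι → β → Prop) [∀ x y, Decidable (r x y)]

/-- The normalized matching property of the bipartite graph `r` between `s` and `t`: the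
neighbourhood of a set `A ⊆ s` occupies at least as large a proportion of `t` as `A` does of `s`.
Denominators are cleared. -/
def IsNormalizedMatching (s : Finset ι) (t : Finset β) : Prop :=
  ∀ A ⊆ s, #A * #t ≤ #{y ∈ t | ∃ x ∈ A, r x y} * #s

variable {r}

lemma IsNormalizedMatching.of_biregular {s : Finset ι} {t : Finset β} {d e : ℕ} (he : 0 < e)
    (habove : ∀ x ∈ s, #(t.bipartiteAbove r x) = d)
    (hbelow : ∀ y ∈ t, #(s.bipartiteBelow r y) = e) : IsNormalizedMatching r s t := by
  intro A hA
  have htotal : #s * d = #t * e := card_mul_eq_card_mul r habove hbelow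
  have hlocal : #A * d ≤ #{y ∈ t | ∃ x ∈ A, r x y} * e := by
    refine card_mul_le_card_mul r (fun x hx => ?_) fun y hy => ?_
    · rw [← habove x (hA hx)]
      refine card_le_card fun y hy => ?_
      obtain ⟨hyt, hxy⟩ := mem_bipartiteAbove r |>.1 hy
      exact mem_bipartiteAbove r |>.2 ⟨mem_filter.2 ⟨hyt, x, hx, hxy⟩, hxy⟩
    · rw [← hbelow y (mem_filter.1 hy).1]
      exact card_le_card (filter_subset_filter _ hA)
  refine Nat.le_of_mul_le_mul_right ?_ he
  calc #A * #t * e = #A * d * #s := by rw [mul_assoc, ← htotal]; ring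
    _ ≤ #{y ∈ t | ∃ x ∈ A, r x y} * e * #s := Nat.mul_le_mul_right _ hlocal
    _ = #{y ∈ t | ∃ x ∈ A, r x y} * #s * e := by ring

/-- Several sources can share the target `t` because the proportions of `t` that they need add up
to at most one. -/
lemma card_le_card_neighbors_of_isNormalizedMatching {τ : Type*} [DecidableEq τ] {s : Finset ι}
    {t : Finset β} (type : ι → τ)
    (hnorm : ∀ k ∈ s.image type, IsNormalizedMatching r {x ∈ s | type x = k} t)
    (hcard : #s ≤ #t) {A : Finset ι} (hA : A ⊆ s) : #A ≤ #{y ∈ t | ∃ x ∈ A, r x y} := by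
  obtain ht | ht := (#t).eq_zero_or_pos
  · exact (card_le_card hA).trans (by lia)
  refine Nat.le_of_mul_le_mul_right ?_ ht
  have hmaps {B : Finset ι} (hB : B ⊆ s) : Set.MapsTo type B (s.image type) :=
    fun x hx => mem_image_of_mem _ (hB hx)
  calc #A * #t = ∑ k ∈ s.image type, #{x ∈ A | type x = k} * #t := by
        rw [card_eq_sum_card_fiberwise (hmaps hA), sum_mul]
    _ ≤ ∑ k ∈ s.image type, #{y ∈ t | ∃ x ∈ A, r x y} * #{x ∈ s | type x = k} := by
        refine sum_le_sum fun k hk => (hnorm k hk _ (filter_subset_filter _ hA)).trans ?_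
        gcongr
        exact filter_subset _ _
    _ = #{y ∈ t | ∃ x ∈ A, r x y} * #s := by
        rw [← mul_sum, ← card_eq_sum_card_fiberwise (hmaps Subset.rfl)]
    _ ≤ #{y ∈ t | ∃ x ∈ A, r x y} * #t := Nat.mul_le_mul_left _ hcard

lemma exists_injective_of_forall_fiber {κ : Type*} (label : ι → κ) (t : κ → Finset β)
    (ht : Pairwise (Disjoint on t))
    (hall : ∀ k, ∀ A : Finset ι, (∀ x ∈ A, label x = k) → #A ≤ #{y ∈ t k | ∃ x ∈ A, r x y}) :
    ∃ φ : ι → β, Injective φ ∧ ∀ x, φ x ∈ t (label x) ∧ r x (φ x) := by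
  classical
  have hfiber (k : κ) : ∃ φ : {x // label x = k} → β, Injective φ ∧
      ∀ x : {x // label x = k}, φ x ∈ ({y ∈ t k | r x y} : Finset β) := by
    refine (all_card_le_biUnion_card_iff_exists_injective _).1 fun A => ?_
    calc #A = #(A.map (Embedding.subtype _)) := (card_map _).symm
      _ ≤ _ := hall k _ fun x hx => by
        obtain ⟨x, -, rfl⟩ := mem_map.1 hx
        exact x.2
      _ ≤ _ := card_le_card fun y hy => by
        simp only [mem_filter, mem_map, mem_biUnion] at hy ⊢
        obtain ⟨hyt, _, ⟨x, hx, rfl⟩, hxy⟩ := hy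
        exact ⟨x, hx, hyt, hxy⟩
  choose φ hinj hmem using hfiber
  have hφ (x : ι) : φ (label x) ⟨x, rfl⟩ ∈ t (label x) ∧ r x (φ (label x) ⟨x, rfl⟩) :=
    mem_filter.1 (hmem (label x) ⟨x, rfl⟩)
  refine ⟨fun x => φ (label x) ⟨x, rfl⟩, fun x y hxy => ?_, hφ⟩
  have hlabel : label x = label y :=
    ht.eq (not_disjoint_iff.2 ⟨_, (hφ x).1, by simpa only [hxy] using (hφ y).1⟩)
  have hcongr {k : κ} (hk : label y = k) : φ (label y) ⟨y, rfl⟩ = φ k ⟨y, hk⟩ := by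
    subst hk
    rfl
  exact congrArg Subtype.val (hinj _ (hxy.trans (hcongr hlabel.symm)))

lemma exists_injective_of_isNormalizedMatching [Fintype ι] {τ κ : Type*} [DecidableEq τ]
    [DecidableEq κ] (type : ι → τ) (f : τ → κ) (t : κ → Finset β) (ht : Pairwise (Disjoint on t))
    (hnorm : ∀ x, IsNormalizedMatching r {x' | type x' = type x} (t (f (type x))))
    (hcard : ∀ x, #{x' | f (type x') = f (type x)} ≤ #(t (f (type x)))) :
    ∃ φ : ι → β, Injective φ ∧ ∀ x, φ x ∈ t (f (type x)) ∧ r x (φ x) := by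
  refine exists_injective_of_forall_fiber (f ∘ type) t ht fun k A hA => ?_
  obtain rfl | ⟨x₀, hx₀⟩ := A.eq_empty_or_nonempty
  · simp
  obtain rfl : f (type x₀) = k := hA x₀ hx₀
  refine card_le_card_neighbors_of_isNormalizedMatching type (fun k hk => ?_) (hcard x₀)
    fun x hx => mem_filter.2 ⟨mem_univ x, hA x hx⟩
  obtain ⟨x, hx, rfl⟩ := mem_image.1 hk
  have hfx : f (type x) = f (type x₀) := (mem_filter.1 hx).2
  convert hnorm x using 1
  · grind
  · rw [hfx]

end Matching

section Counting

lemma card_filter_card_pair_eq {α β : Type*} [Fintype α] [Fintype β] (p : ℕ × ℕ) :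
    #{x : Finset α × Finset β | (#x.1, #x.2) = p} =
      (Fintype.card α).choose p.1 * (Fintype.card β).choose p.2 := by
  have heq : ({x | (#x.1, #x.2) = p} : Finset (Finset α × Finset β)) =
      powersetCard p.1 univ ×ˢ powersetCard p.2 univ := by
    simp [Finset.ext_iff, mem_powersetCard, Prod.ext_iff]
  rw [heq, card_product, card_powersetCard, card_powersetCard, card_univ, card_univ]

lemma card_filter_card_pair_eq_sum {α β : Type*} [Fintype α] [Fintype β] (P : ℕ × ℕ → Prop)
    [DecidablePred P] :
    #{x : Finset α × Finset β | P (#x.1, #x.2)} =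
      ∑ q ∈ Iic (Fintype.card α, Fintype.card β) with P q,
        (Fintype.card α).choose q.1 * (Fintype.card β).choose q.2 := by
  rw [card_eq_sum_card_fiberwise (f := fun x => (#x.1, #x.2)) (t := {q ∈ Iic _ | P q})]
  · refine sum_congr rfl fun q hq => ?_
    rw [← card_filter_card_pair_eq]
    congr 1
    grind
  · exact fun x hx => mem_filter.2
      ⟨mem_Iic.2 ⟨card_le_univ _, card_le_univ _⟩, (mem_filter.1 hx).2⟩

variable {α : Type*} [DecidableEq α]

lemma card_supersets_of_card [Fintype α] (S : Finset α) {a : ℕ} (ha : a ≤ Fintype.card α) :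
    #{X ∈ powersetCard a univ | S ⊆ X} =
      (Fintype.card α - #S).choose (Fintype.card α - a) := by
  rw [← card_compl, ← card_powersetCard]
  refine card_nbij' compl compl (fun X hX => ?_) (fun X hX => ?_)
    (fun X _ => compl_compl X) (fun X _ => compl_compl X)
  · simp_all [mem_powersetCard, card_compl]
  · simp_all [mem_powersetCard, card_compl, subset_compl_comm, Nat.sub_sub_self ha]

/-- The number of ways to write a `d`-element set as a union `P ∪ Q` with `c + #P + #Q ≤ w`. The
summation index is `#(P ∩ Q)`. -/
def coverCount (c d w : ℕ) : ℕ :=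
  ∑ e ∈ range (d + 1), d.choose e * if c + d + e ≤ w then 2 ^ (d - e) else 0

lemma card_filter_union_eq (c w : ℕ) (D : Finset α) :
    #{q ∈ D.powerset ×ˢ D.powerset | q.1 ∪ q.2 = D ∧ c + #q.1 + #q.2 ≤ w} =
      coverCount c #D w := by
  calc _ = #({R ∈ D.powerset | c + #D + #R ≤ w}.sigma fun R => (D \ R).powerset) := by
        refine card_bij' (fun q _ => ⟨q.1 ∩ q.2, q.1 \ q.2⟩) (fun p _ => (p.1 ∪ p.2, D \ p.2))
          ?_ ?_ ?_ ?_
        · rintro ⟨P, Q⟩ hPQ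
          have hcard := card_union_add_card_inter P Q
          grind
        · rintro ⟨R, T⟩ hRT
          have hunion : (R ∪ T) ∪ D \ T = D := by grind
          have hinter : (R ∪ T) ∩ (D \ T) = R := by grind
          have hcard := card_union_add_card_inter (R ∪ T) (D \ T)
          grind
        · rintro ⟨P, Q⟩ hPQ
          exact Prod.ext (by grind) (by grind)
        · rintro ⟨R, T⟩ hRT
          simp only [Sigma.mk.injEq, heq_eq_eq]
          grind
    _ = ∑ R ∈ D.powerset, if c + #D + #R ≤ w then 2 ^ (#D - #R) else 0 := by
        rw [card_sigma, sum_filter]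
        refine sum_congr rfl fun R hR => ?_
        rw [card_powerset, card_sdiff_of_subset (mem_powerset.1 hR)]
    _ = coverCount c #D w := by
        simp only [coverCount, sum_powerset_apply_card
          (fun e => if c + #D + e ≤ w then 2 ^ (#D - e) else 0), smul_eq_mul]

/-- The number of words of type `u` and weight at most `w` over `s` left vertices of degree one and
`t` left vertices of degree two; see `card_lightWords`. -/
def lightWordCount (s t w : ℕ) (u : ℕ × ℕ) : ℕ :=
  s.choose u.1 * (t.choose u.2 * coverCount u.1 u.2 w)

end Counting

section Words

variable {α β : Type*} [DecidableEq β] {w : ℕ} {X : Finset α} {Y : Finset β}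

/-- The words `(T, P, Q)` of weight at most `w` and type `u = (#T, #(P ∪ Q))` that are dominated by
`(X, Y)`. The right vertices form one copy of `α`, supporting `T`, and two copies of `β`,
supporting `P` and `Q`. -/
def lightWords (w : ℕ) (X : Finset α) (Y : Finset β) (u : ℕ × ℕ) :
    Finset (Finset α × Finset β × Finset β) :=
  powersetCard u.1 X ×ˢ (powersetCard u.2 Y).biUnion fun D =>
    {q ∈ D.powerset ×ˢ D.powerset | q.1 ∪ q.2 = D ∧ u.1 + #q.1 + #q.2 ≤ w}

lemma mem_lightWords {u : ℕ × ℕ} {y : Finset α × Finset β × Finset β} :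
    y ∈ lightWords w X Y u ↔ (y.1 ⊆ X ∧ y.2.1 ∪ y.2.2 ⊆ Y) ∧
      (#y.1, #(y.2.1 ∪ y.2.2)) = u ∧ #y.1 + #y.2.1 + #y.2.2 ≤ w := by
  simp only [lightWords, mem_product, mem_powersetCard, mem_biUnion, mem_filter, mem_powerset,
    Prod.ext_iff]
  grind

lemma card_lightWords (u : ℕ × ℕ) : #(lightWords w X Y u) = lightWordCount #X #Y w u := by
  rw [lightWords, lightWordCount, card_product, card_powersetCard, card_biUnion]
  · rw [sum_congr rfl fun D hD => (card_filter_union_eq _ _ D).trans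
      (by rw [(mem_powersetCard.1 hD).2]), sum_const, card_powersetCard, smul_eq_mul]
  · intro D _ D' _ hne
    refine disjoint_left.2 fun q hq hq' => hne ?_
    rw [← (mem_filter.1 hq).2.1, (mem_filter.1 hq').2.1]

lemma isNormalizedMatching_lightWords [Fintype α] [Fintype β] [DecidableEq α]
    {p u : ℕ × ℕ} (hu : u ≤ p) (hp : p ≤ (Fintype.card α, Fintype.card β)) :
    IsNormalizedMatching (fun (x : Finset α × Finset β) y => y.1 ⊆ x.1 ∧ y.2.1 ∪ y.2.2 ⊆ x.2)
      {x | (#x.1, #x.2) = p} (lightWords w univ univ u) := by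
  refine .of_biregular (d := lightWordCount p.1 p.2 w u)
    (e := (Fintype.card α - u.1).choose (Fintype.card α - p.1) *
      (Fintype.card β - u.2).choose (Fintype.card β - p.2)) ?_ (fun x hx => ?_) fun y hy => ?_
  · exact Nat.mul_pos (Nat.choose_pos (Nat.sub_le_sub_left hu.1 _))
      (Nat.choose_pos (Nat.sub_le_sub_left hu.2 _))
  · obtain rfl : (#x.1, #x.2) = p := (mem_filter.1 hx).2
    rw [← card_lightWords (X := x.1) (Y := x.2)]
    congr 1
    ext y
    simp only [mem_bipartiteAbove, mem_lightWords, subset_univ]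
    tauto
  · obtain ⟨-, rfl, -⟩ := mem_lightWords.1 hy
    rw [← card_supersets_of_card y.1 hp.1, ← card_supersets_of_card _ hp.2, ← card_product]
    congr 1
    ext x
    simp only [mem_bipartiteBelow, mem_filter, mem_univ, true_and, mem_product, mem_powersetCard,
      subset_univ, Prod.ext_iff]
    tauto

lemma exists_dominated_words [Fintype α] [Fintype β] (f : ℕ × ℕ → ℕ × ℕ)
    (hle : ∀ p ∈ Iic (Fintype.card α, Fintype.card β), f p ≤ p)
    (hcount : ∀ p ∈ Iic (Fintype.card α, Fintype.card β),
      ∑ q ∈ Iic (Fintype.card α, Fintype.card β) with f q = f p,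
        (Fintype.card α).choose q.1 * (Fintype.card β).choose q.2 ≤
      lightWordCount (Fintype.card α) (Fintype.card β) w (f p)) :
    ∃ φ : Finset α × Finset β → Finset α × Finset β × Finset β, Injective φ ∧ ∀ x,
      ((φ x).1 ⊆ x.1 ∧ (φ x).2.1 ∪ (φ x).2.2 ⊆ x.2) ∧
        #(φ x).1 + #(φ x).2.1 + #(φ x).2.2 ≤ w := by
  classical
  let type (x : Finset α × Finset β) : ℕ × ℕ := (#x.1, #x.2)
  have htype (x : Finset α × Finset β) : type x ∈ Iic (Fintype.card α, Fintype.card β) :=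
    mem_Iic.2 ⟨card_le_univ _, card_le_univ _⟩
  have hdisj : Pairwise (Disjoint on lightWords w (univ : Finset α) (univ : Finset β)) := by
    refine fun u u' hne => disjoint_left.2 fun y hy hy' => hne ?_
    rw [← (mem_lightWords.1 hy).2.1, (mem_lightWords.1 hy').2.1]
  have hcard (x : Finset α × Finset β) :
      #{x' | f (type x') = f (type x)} ≤
        #(lightWords w (univ : Finset α) (univ : Finset β) (f (type x))) := by
    rw [card_lightWords, card_univ, card_univ]
    exact (card_filter_card_pair_eq_sum fun q => f q = f (type x)).trans_le (hcount _ (htype x))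
  obtain ⟨φ, hinj, hφ⟩ := exists_injective_of_isNormalizedMatching type f _ hdisj
    (fun x => isNormalizedMatching_lightWords (hle _ (htype x)) (mem_Iic.1 (htype x))) hcard
  exact ⟨φ, hinj, fun x => ⟨(hφ x).2, (mem_lightWords.1 (hφ x).1).2.2⟩⟩

theorem existsDomMap_of_typeMap {s t : ℕ} (f : ℕ × ℕ → ℕ × ℕ)
    (hle : ∀ p ∈ Iic (s, t), f p ≤ p)
    (hcount : ∀ p ∈ Iic (s, t), ∑ q ∈ Iic (s, t) with f q = f p,
      s.choose q.1 * t.choose q.2 ≤ lightWordCount s t w (f p)) :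
    ExistsDomMap (s + t) (s + (t + t)) w := by
  obtain ⟨φ, hinj, hφ⟩ := exists_dominated_words (α := Fin s) (β := Fin t) (w := w) f
    (by simpa only [Fintype.card_fin] using hle) (by simpa only [Fintype.card_fin] using hcount)
  have hmap := existsDomMap_of_finset_map (w := w) (Sum.elim Sum.inl (Sum.elim Sum.inr Sum.inr))
    (φ := fun X : Finset (Fin s ⊕ Fin t) =>
      sumEquiv.symm (Prod.map id sumEquiv.symm (φ (sumEquiv X))))
    (sumEquiv.symm.injective.comp ((injective_id.prodMap sumEquiv.symm.injective).comp
      (hinj.comp sumEquiv.injective)))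
    (fun X => ?_) ?_
  · simpa only [Fintype.card_sum, Fintype.card_fin] using hmap
  · simpa [add_assoc] using (hφ (sumEquiv X)).2
  · rintro X (b | b | b) hb
    · simpa using (hφ (sumEquiv X)).1.1 (by simpa using hb)
    · simpa using (hφ (sumEquiv X)).1.2 (mem_union_left _ (by simpa using hb))
    · simpa using (hφ (sumEquiv X)).1.2 (mem_union_right _ (by simpa using hb))

end Words

section Base

/-- The type map sending `(a, b)` to entry `b` of row `a`, and to `(0, 0)` outside the table. -/
def typeMapOfRows (rows : List (List (ℕ × ℕ))) (p : ℕ × ℕ) : ℕ × ℕ :=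
  (rows[p.1]!)[p.2]!

-- The tables in the next three proofs were found by a computer search.
lemma existsDomMap_nine : ExistsDomMap 9 15 3 :=
  existsDomMap_of_typeMap (s := 3) (t := 6) (typeMapOfRows [
    [(0,0), (0,1), (0,2), (0,3), (0,2), (0,1), (0,1)],
    [(1,0), (1,1), (0,2), (0,3), (1,2), (0,3), (0,1)],
    [(2,0), (1,1), (0,2), (0,3), (1,2), (1,2), (1,1)],
    [(3,0), (1,1), (2,1), (2,1), (1,2), (1,1), (2,1)]])
    (by decide +kernel) (by decide +kernel)

lemma existsDomMap_twelve : ExistsDomMap 12 20 4 :=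
  existsDomMap_of_typeMap (s := 4) (t := 8) (typeMapOfRows [
    [(0,0), (0,1), (0,2), (0,2), (0,3), (0,2), (0,3), (0,1), (0,1)],
    [(1,0), (1,1), (0,2), (1,2), (0,3), (0,4), (0,4), (0,4), (0,4)],
    [(2,0), (1,1), (2,2), (2,2), (1,2), (0,3), (2,2), (0,4), (0,1)],
    [(3,0), (3,1), (2,1), (1,2), (0,3), (0,4), (0,4), (2,1), (3,1)],
    [(4,0), (1,1), (1,2), (0,3), (0,3), (0,4), (3,1), (1,1), (0,1)]])
    (by decide +kernel) (by decide +kernel)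

lemma existsDomMap_fifteen : ExistsDomMap 15 25 5 :=
  existsDomMap_of_typeMap (s := 5) (t := 10) (typeMapOfRows [
    [(0,0), (0,1), (0,2), (0,2), (0,3), (0,3), (0,3), (0,3), (0,3), (0,1), (0,2)],
    [(1,0), (1,1), (0,2), (1,2), (0,3), (0,5), (0,5), (0,5), (1,2), (0,5), (0,2)],
    [(2,0), (1,1), (1,2), (0,3), (2,2), (0,5), (2,3), (2,3), (0,4), (0,4), (2,2)],
    [(3,0), (2,1), (1,2), (3,2), (2,3), (0,5), (2,3), (2,3), (0,4), (0,4), (0,5)],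
    [(4,0), (4,1), (3,1), (3,2), (0,4), (2,2), (0,4), (2,3), (2,2), (4,1), (2,2)],
    [(5,0), (0,1), (1,2), (2,1), (2,3), (1,2), (0,4), (0,4), (0,5), (0,3), (1,2)]])
    (by decide +kernel) (by decide +kernel)

end Base

/-- For every w ≥ 3, there exists a (3w, 5w, w)-domination mapping. -/
theorem stmt_8 (w : ℕ) (hw : 3 ≤ w) : ExistsDomMap (3 * w) (5 * w) w := by
  induction w using Nat.strong_induction_on with
  | h w ih =>
    obtain rfl | rfl | rfl | hw' : w = 3 ∨ w = 4 ∨ w = 5 ∨ 3 ≤ w - 3 := by lia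
    · exact existsDomMap_nine
    · exact existsDomMap_twelve
    · exact existsDomMap_fifteen
    · convert (ih (w - 3) (by lia) hw').add existsDomMap_nine using 1 <;> lia
end

section
/- For all integers w ≥ 3 and all m with w ≤ m ≤ 3w, ν(m,w) = 2m − w, where ν(m,w) denotes the minimum n for which an (m,n,w)-domination mapping exists. -/
/-!
For the upper bound take `w` left vertices with one neighbour each and `2w` left vertices with two
neighbours each; smaller `m` follow by deleting vertices of the second kind. By Hall's theorem a
domination mapping exists as soon as every lower set `𝒟` of left words is at most as large as the
set of words of the ball whose projection to the left lies in `𝒟`. Written as `(s, t)`, with `s`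
in the degree-one coordinates, these words are counted in two steps. The words over a fixed `v` in
the degree-two coordinates form a lower set in `s`, so by Harris–Kleitman the count is at least
its average over `s`. The number of words over `v` depends only on `#v`, is at least `2 ^ w` for
`#v ≤ w` and zero beyond; since the slice densities of a lower set decrease (local LYM), the
surplus over `2 ^ w` has nonnegative sum over a lower set as soon as its total sum is nonnegative,
that is, as soon as the ball has at least `2 ^ (3w)` elements.

For the lower bound, let `S` consist of the left vertices with at most one neighbour. Words
supported on `S` are mapped into the words supported on the neighbours of `S`, of which there are
at most `#S`; so this restriction is onto, the all-ones word is attained, and `#S ≤ w`. All other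
left vertices have at least two neighbours.
-/

open Finset
open scoped FinsetFamily

section LowerSets

variable {α : Type*} [Fintype α]

theorem antitone_card_slice_div_choose {𝒜 : Finset (Finset α)}
    (h𝒜 : IsLowerSet (𝒜 : Set (Finset α))) :
    Antitone fun j => (#(𝒜 # j) : ℚ) / (Fintype.card α).choose j := by
  classical
  refine antitone_nat_of_succ_le fun j => ?_
  have shadow_subset : ∂ (𝒜 # (j + 1)) ⊆ 𝒜 # j := by
    intro t ht
    obtain ⟨a, hat, ha⟩ := mem_shadow_iff_insert_mem.1 ht
    obtain ⟨hmem, hcard⟩ := mem_slice.1 ha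
    rw [card_insert_of_notMem hat] at hcard
    exact mem_slice.2 ⟨h𝒜 (subset_insert a t) hmem, Nat.succ_injective hcard⟩
  calc (#(𝒜 # (j + 1)) : ℚ) / (Fintype.card α).choose (j + 1)
      ≤ #(∂ (𝒜 # (j + 1))) / (Fintype.card α).choose j :=
        local_lubell_yamamoto_meshalkin_inequality_div j.succ_ne_zero sized_slice
    _ ≤ #(𝒜 # j) / (Fintype.card α).choose j := by gcongr

theorem sum_mul_nonneg_of_antitone {ι R : Type*} [LinearOrder ι] [CommRing R] [LinearOrder R]
    [IsStrictOrderedRing R] {s : Finset ι} {f c : ι → R} {k : ι} (hf : Antitone f)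
    (hfk : 0 ≤ f k) (hpos : ∀ i ∈ s, i ≤ k → 0 ≤ c i) (hneg : ∀ i ∈ s, k < i → c i ≤ 0)
    (hsum : 0 ≤ ∑ i ∈ s, c i) : 0 ≤ ∑ i ∈ s, f i * c i :=
  calc 0 ≤ f k * ∑ i ∈ s, c i := mul_nonneg hfk hsum
    _ = ∑ i ∈ s, f k * c i := mul_sum _ _ _
    _ ≤ ∑ i ∈ s, f i * c i := by
      refine sum_le_sum fun i hi => ?_
      rcases le_or_gt i k with hik | hki
      · exact mul_le_mul_of_nonneg_right (hf hik) (hpos i hi hik)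
      · exact mul_le_mul_of_nonpos_right (hf hki.le) (hneg i hi hki)

theorem sum_apply_card_eq_sum_card_slice_mul {R : Type*} [CommSemiring R]
    (𝒜 : Finset (Finset α)) (h : ℕ → R) :
    ∑ v ∈ 𝒜, h #v = ∑ j ∈ Iic (Fintype.card α), #(𝒜 # j) * h j := by
  rw [← sum_fiberwise_of_maps_to (g := card) (t := Iic (Fintype.card α))
    fun v _ => mem_Iic.2 (card_le_univ v)]
  refine sum_congr rfl fun j _ => ?_
  rw [sum_congr rfl fun v hv => by rw [(mem_filter.1 hv).2], sum_const, nsmul_eq_mul, slice]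

theorem sum_nonneg_of_isLowerSet {𝒜 : Finset (Finset α)} {F : Finset α → ℚ} {k : ℕ}
    (h𝒜 : IsLowerSet (𝒜 : Set (Finset α))) (hF : F.FactorsThrough card)
    (hpos : ∀ v, #v ≤ k → 0 ≤ F v) (hneg : ∀ v, k < #v → F v ≤ 0) (hsum : 0 ≤ ∑ v, F v) :
    0 ≤ ∑ v ∈ 𝒜, F v := by
  obtain ⟨h, rfl⟩ := (Function.factorsThrough_iff F).1 hF
  have exists_card_eq : ∀ j ∈ Iic (Fintype.card α), ∃ v : Finset α, #v = j := fun j hj => by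
    simpa using exists_subset_card_eq (s := (univ : Finset α)) (mem_Iic.1 hj)
  have card_slice_univ (j : ℕ) :
      #((univ : Finset (Finset α)) # j) = (Fintype.card α).choose j := by
    rw [slice, univ_filter_card_eq, card_powersetCard, card_univ]
  simp only [Function.comp_apply, sum_apply_card_eq_sum_card_slice_mul, card_slice_univ]
    at hsum hpos hneg ⊢
  have density_mul : ∀ j ∈ Iic (Fintype.card α), (#(𝒜 # j) : ℚ) * h j =
      #(𝒜 # j) / (Fintype.card α).choose j * ((Fintype.card α).choose j * h j) := by
    intro j hj
    have : ((Fintype.card α).choose j : ℚ) ≠ 0 :=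
      Nat.cast_ne_zero.2 (Nat.choose_pos (mem_Iic.1 hj)).ne'
    field_simp
  rw [sum_congr rfl density_mul]
  refine sum_mul_nonneg_of_antitone (k := k) (antitone_card_slice_div_choose h𝒜) (by positivity)
    (fun j hj hjk => ?_) (fun j hj hkj => ?_) hsum
  all_goals obtain ⟨v, rfl⟩ := exists_card_eq j hj
  · exact mul_nonneg (Nat.cast_nonneg _) (hpos v hjk)
  · exact mul_nonpos_of_nonneg_of_nonpos (Nat.cast_nonneg _) (hneg v hkj)

theorem card_mul_card_le_two_pow_mul_card_filter {β : Type*} [DecidableEq α]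
    {ℬ : Finset (Finset α)} (hℬ : IsLowerSet (ℬ : Set (Finset α))) {X : Finset (Finset α × β)}
    (hX : ∀ t, IsLowerSet {s | (s, t) ∈ X}) :
    #ℬ * #X ≤ 2 ^ Fintype.card α * #{y ∈ X | y.1 ∈ ℬ} := by
  classical
  let slice (t : β) : Finset (Finset α) := {s | (s, t) ∈ X}
  have isLowerSet_slice (t : β) : IsLowerSet (slice t : Set (Finset α)) := by
    simpa [slice] using hX t
  calc #ℬ * #X = ∑ t ∈ X.image Prod.snd, #ℬ * #(slice t) := by
        simp only [card_eq_sum_ones X, ← mul_sum, card_eq_sum_ones (slice _)]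
        rw [sum_finset_product_right X (X.image Prod.snd) slice (by grind)]
    _ ≤ ∑ t ∈ X.image Prod.snd, 2 ^ Fintype.card α * #(ℬ ∩ slice t) :=
      sum_le_sum fun t _ => hℬ.le_card_inter_finset (isLowerSet_slice t)
    _ = 2 ^ Fintype.card α * #{y ∈ X | y.1 ∈ ℬ} := by
        simp only [card_eq_sum_ones, ← mul_sum]
        rw [sum_finset_product_right _ (X.image Prod.snd) (ℬ ∩ slice ·) (by grind)]

theorem exists_injective_of_card_le_card_filter {P Y : Type*} [Preorder P] [Finite P]
    [DecidableEq P] (σ : Y → P) (B : Finset Y)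
    (h : ∀ 𝒟 : Finset P, IsLowerSet (𝒟 : Set P) → #𝒟 ≤ #{y ∈ B | σ y ∈ 𝒟}) :
    ∃ f : P → Y, Function.Injective f ∧ ∀ x, f x ∈ B ∧ σ (f x) ≤ x := by
  classical
  have := Fintype.ofFinite P
  have hall (s : Finset P) : #s ≤ #(s.biUnion fun x => {y ∈ B | σ y ≤ x}) := by
    let 𝒟 : Finset P := {z | ∃ x ∈ s, z ≤ x}
    have h𝒟 : IsLowerSet (𝒟 : Set P) := by
      intro a b hba ha
      simp only [𝒟, coe_filter, mem_univ, true_and, Set.mem_ofPred_eq] at ha ⊢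
      obtain ⟨x, hx, hax⟩ := ha
      exact ⟨x, hx, hba.trans hax⟩
    calc #s ≤ #𝒟 := card_le_card fun x hx => mem_filter.2 ⟨mem_univ x, x, hx, le_rfl⟩
      _ ≤ #{y ∈ B | σ y ∈ 𝒟} := h 𝒟 h𝒟
      _ ≤ _ := card_le_card fun y hy => by
        simpa [𝒟, ← exists_and_left, and_left_comm] using hy
  obtain ⟨f, hf, hmem⟩ := (all_card_le_biUnion_card_iff_exists_injective _).1 hall
  exact ⟨f, hf, fun x => mem_filter.1 (hmem x)⟩

end LowerSets

section Ball

theorem exists_perm_map_eq_of_card_eq {α : Type*} [Finite α] {s t : Finset α} (h : #s = #t) :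
    ∃ σ : Equiv.Perm α, s.map σ.toEmbedding = t := by
  classical
  let σ : Equiv.Perm α := (equivOfCardEq h).extendSubtype
  have map_subset : s.map σ.toEmbedding ⊆ t := by
    intro b hb
    obtain ⟨a, ha, rfl⟩ := mem_map.1 hb
    exact (equivOfCardEq h).extendSubtype_mem a ha
  exact ⟨σ, eq_of_subset_of_card_le map_subset (by rw [card_map, h])⟩

variable (U κ : Type*) {V : Type*} [Fintype U] [Fintype V] [Fintype κ] [DecidableEq V]

/-- The words of weight at most `w` on the right vertices `U ⊔ V × κ`, encoded as pairs of a
subset of `U` and a subset of `V × κ`, whose second part projects exactly onto `v ⊆ V`. Here each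
element of `U` is a left vertex with a single neighbour, and each element of `V` a left vertex
with `κ` as its set of neighbours. -/
def ballOver (w : ℕ) (v : Finset V) : Finset (Finset U × Finset (V × κ)) :=
  {y | #y.1 + #y.2 ≤ w ∧ y.2.image Prod.fst = v}

theorem card_ballOver_eq_of_card_eq {w : ℕ} {v v' : Finset V} (h : #v = #v') :
    #(ballOver U κ w v) = #(ballOver U κ w v') := by
  classical
  obtain ⟨σ, rfl⟩ := exists_perm_map_eq_of_card_eq h
  refine card_equiv ((Equiv.refl _).prodCongr (σ.prodCongr (.refl κ)).finsetCongr) fun y => ?_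
  have image_fst : (y.2.map (σ.prodCongr (.refl κ)).toEmbedding).image Prod.fst =
      (y.2.image Prod.fst).map σ.toEmbedding := by
    simp only [map_eq_image, image_image]
    rfl
  simp [ballOver, image_fst]

theorem ballOver_eq_empty {w : ℕ} {v : Finset V} (hv : w < #v) : ballOver U κ w v = ∅ := by
  refine filter_eq_empty_iff.2 fun y _ ⟨hweight, himage⟩ => ?_
  have : #v ≤ #y.2 := himage ▸ card_image_le
  exact hv.not_ge (this.trans (le_of_add_le_right hweight))

theorem two_pow_le_card_ballOver [Nontrivial κ] {w : ℕ} {v : Finset V}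
    (hU : Fintype.card U ≤ w) (hv : #v ≤ w) : 2 ^ Fintype.card U ≤ #(ballOver U κ w v) := by
  classical
  obtain ⟨c₀, c₁, hc⟩ := exists_pair_ne κ
  obtain ⟨T, -, hT⟩ := exists_subset_card_eq (s := (univ : Finset U)) (n := Fintype.card U - #v)
    (Nat.sub_le _ _)
  let colour (A : Finset V) : Finset (V × κ) := v.image fun a => (a, if a ∈ A then c₁ else c₀)
  have colour_injOn : Set.InjOn colour {A | A ⊆ v} := by
    have mem_colour (A : Finset V) (a : V) : (a, c₁) ∈ colour A ↔ a ∈ v ∧ a ∈ A := by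
      simp [colour, hc]
    intro A hA B hB hAB
    ext a
    have := (mem_colour A a).symm.trans ((Finset.ext_iff.1 hAB _).trans (mem_colour B a))
    exact ⟨fun ha => (this.1 ⟨hA ha, ha⟩).2, fun ha => (this.2 ⟨hB ha, ha⟩).2⟩
  have colour_mem : ∀ x ∈ T.powerset ×ˢ v.powerset, (x.1, colour x.2) ∈ ballOver U κ w v := by
    intro x hx
    have hs : #x.1 ≤ #T := card_le_card (mem_powerset.1 (mem_product.1 hx).1)
    have hcolour : #(colour x.2) ≤ #v := card_image_le
    refine mem_filter.2 ⟨mem_univ _, by dsimp only; omega, ?_⟩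
    simp [colour, image_image, Function.comp_def]
  calc 2 ^ Fintype.card U ≤ 2 ^ (#T + #v) := Nat.pow_le_pow_right two_pos (by omega)
    _ = #(T.powerset ×ˢ v.powerset) := by rw [card_product, card_powerset, card_powerset, pow_add]
    _ ≤ #(ballOver U κ w v) := by
      refine card_le_card_of_injOn (fun x => (x.1, colour x.2)) colour_mem fun x hx y hy hxy => ?_
      simp only [Prod.mk.injEq] at hxy
      simp only [coe_product, Set.mem_prod, mem_coe, mem_powerset] at hx hy
      exact Prod.ext hxy.1 (colour_injOn hx.2 hy.2 hxy.2)

variable {U κ} in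
theorem card_mul_card_ballOver_le [DecidableEq U] {ℬ : Finset (Finset U)}
    (hℬ : IsLowerSet (ℬ : Set (Finset U))) (w : ℕ) (v : Finset V) :
    #ℬ * #(ballOver U κ w v) ≤ 2 ^ Fintype.card U * #{y ∈ ballOver U κ w v | y.1 ∈ ℬ} := by
  refine card_mul_card_le_two_pow_mul_card_filter hℬ fun t s s' hs' hs => ?_
  simp only [ballOver, mem_filter, mem_univ, true_and, Set.mem_ofPred_eq] at hs ⊢
  exact ⟨(Nat.add_le_add_right (card_le_card hs') _).trans hs.1, hs.2⟩

theorem sum_card_ballOver (w : ℕ) :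
    ∑ v : Finset V, #(ballOver U κ w v) = #{y : Finset (U ⊕ V × κ) | #y ≤ w} := by
  simp only [ballOver, ← filter_filter]
  rw [← card_eq_sum_card_fiberwise (f := fun y : Finset U × Finset (V × κ) => y.2.image Prod.fst)
    (t := univ) fun _ _ => mem_coe.2 (mem_univ _)]
  refine (card_equiv Finset.sumEquiv.toEquiv fun y => ?_).symm
  simp [Finset.sumEquiv, card_toLeft_add_card_toRight]

theorem two_pow_mul_card_le_sum_card_ballOver [Nontrivial κ] {w : ℕ}
    (hU : Fintype.card U ≤ w)
    (hball : 2 ^ (Fintype.card U + Fintype.card V) ≤ #{y : Finset (U ⊕ V × κ) | #y ≤ w})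
    {𝒜 : Finset (Finset V)} (h𝒜 : IsLowerSet (𝒜 : Set (Finset V))) :
    2 ^ Fintype.card U * #𝒜 ≤ ∑ v ∈ 𝒜, #(ballOver U κ w v) := by
  have surplus_nonneg : (0 : ℚ) ≤ ∑ v ∈ 𝒜, (#(ballOver U κ w v) - 2 ^ Fintype.card U : ℚ) := by
    refine sum_nonneg_of_isLowerSet (k := w) h𝒜 (fun v v' h => ?_) (fun v hv => ?_)
      (fun v hv => ?_) ?_
    · rw [card_ballOver_eq_of_card_eq U κ h]
    · exact sub_nonneg.2 (mod_cast two_pow_le_card_ballOver U κ hU hv)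
    · simp [ballOver_eq_empty U κ hv]
    · rw [sum_sub_distrib, sub_nonneg, ← Nat.cast_sum, sum_card_ballOver]
      rw [pow_add, mul_comm] at hball
      simpa using mod_cast hball
  rw [sum_sub_distrib, sub_nonneg, sum_const, nsmul_eq_mul, mul_comm] at surplus_nonneg
  exact_mod_cast surplus_nonneg

variable {κ}

theorem two_pow_mul_card_le_sum_card_ballOver_snd [Nontrivial κ]
    {𝒟 : Finset (Finset U × Finset V)} (h𝒟 : IsLowerSet (𝒟 : Set (Finset U × Finset V))) {w : ℕ}
    (hU : Fintype.card U ≤ w)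
    (hball : 2 ^ (Fintype.card U + Fintype.card V) ≤ #{y : Finset (U ⊕ V × κ) | #y ≤ w}) :
    2 ^ Fintype.card U * #𝒟 ≤ ∑ x ∈ 𝒟, #(ballOver U κ w x.2) := by
  classical
  let slice (u : Finset U) : Finset (Finset V) := {v | (u, v) ∈ 𝒟}
  have isLowerSet_slice (u : Finset U) : IsLowerSet (slice u : Set (Finset V)) :=
    fun v v' hv' hv => mem_filter.2
      ⟨mem_univ _, h𝒟 (Prod.mk_le_mk.2 ⟨le_rfl, hv'⟩) (mem_filter.1 hv).2⟩
  have mem_iff (x : Finset U × Finset V) : x ∈ 𝒟 ↔ x.1 ∈ univ ∧ x.2 ∈ slice x.1 := by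
    simp [slice]
  have card_eq_sum : #𝒟 = ∑ u, #(slice u) := by
    simp only [card_eq_sum_ones, sum_finset_product 𝒟 univ slice mem_iff]
  rw [card_eq_sum, mul_sum, sum_finset_product 𝒟 univ slice mem_iff]
  exact sum_le_sum fun u _ =>
    two_pow_mul_card_le_sum_card_ballOver U κ hU hball (isLowerSet_slice u)

theorem sum_card_ballOver_snd_le [DecidableEq U] {𝒟 : Finset (Finset U × Finset V)}
    (h𝒟 : IsLowerSet (𝒟 : Set (Finset U × Finset V))) (w : ℕ) :
    ∑ x ∈ 𝒟, #(ballOver U κ w x.2) ≤ 2 ^ Fintype.card U *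
      #{y : Finset U × Finset (V × κ) | #y.1 + #y.2 ≤ w ∧ (y.1, y.2.image Prod.fst) ∈ 𝒟} := by
  let slice (v : Finset V) : Finset (Finset U) := {u | (u, v) ∈ 𝒟}
  have isLowerSet_slice (v : Finset V) : IsLowerSet (slice v : Set (Finset U)) :=
    fun u u' hu' hu => mem_filter.2
      ⟨mem_univ _, h𝒟 (Prod.mk_le_mk.2 ⟨hu', le_rfl⟩) (mem_filter.1 hu).2⟩
  have mem_iff (x : Finset U × Finset V) : x ∈ 𝒟 ↔ x.2 ∈ univ ∧ x.1 ∈ slice x.2 := by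
    simp [slice]
  calc ∑ x ∈ 𝒟, #(ballOver U κ w x.2) = ∑ v, #(slice v) * #(ballOver U κ w v) := by
        simp only [sum_finset_product_right 𝒟 univ slice mem_iff, sum_const, smul_eq_mul]
    _ ≤ ∑ v, 2 ^ Fintype.card U * #{y ∈ ballOver U κ w v | y.1 ∈ slice v} :=
        sum_le_sum fun v _ => card_mul_card_ballOver_le (isLowerSet_slice v) w v
    _ = 2 ^ Fintype.card U *
        #{y : Finset U × Finset (V × κ) | #y.1 + #y.2 ≤ w ∧ (y.1, y.2.image Prod.fst) ∈ 𝒟} := by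
        rw [← mul_sum, card_eq_sum_card_fiberwise
          (f := fun y : Finset U × Finset (V × κ) => y.2.image Prod.fst) (t := univ)
          fun _ _ => mem_coe.2 (mem_univ _)]
        refine congrArg _ (sum_congr rfl fun v _ => congrArg card ?_)
        ext y
        simp only [ballOver, slice, mem_filter, mem_univ, true_and]
        grind

end Ball

section Domination

/-- The identification of binary words with their supports. -/
def wordEquivFinset {α : Type*} [Fintype α] [DecidableEq α] : (α → Bool) ≃ Finset α where
  toFun y := {j | y j = true}
  invFun s j := decide (j ∈ s)
  left_inv y := by simp
  right_inv s := by simp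

/-- A domination mapping in terms of supports of words, for the domination graph in which the
right vertex `r` has `π r` as its only neighbour. A general domination graph may be thinned out to
one of this shape, which only weakens the domination condition. -/
def IsSetDominationMap {L R : Type*} (π : R → L) (w : ℕ) (f : Finset L → Finset R) : Prop :=
  Function.Injective f ∧ ∀ x, #(f x) ≤ w ∧ ∀ r ∈ f x, π r ∈ x

variable {L R : Type*} {π : R → L} {w : ℕ} {f : Finset L → Finset R}

theorem exists_isSetDominationMap_sumMap {U V κ : Type*} [Fintype U] [Fintype V] [Fintype κ]
    [Nontrivial κ] (hU : Fintype.card U ≤ w)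
    (hball : 2 ^ (Fintype.card U + Fintype.card V) ≤ #{y : Finset (U ⊕ V × κ) | #y ≤ w}) :
    ∃ f, IsSetDominationMap (Sum.map id Prod.fst : U ⊕ V × κ → U ⊕ V) w f := by
  classical
  let shadow (y : Finset U × Finset (V × κ)) : Finset U × Finset V := (y.1, y.2.image Prod.fst)
  have hall (𝒟 : Finset (Finset U × Finset V)) (h𝒟 : IsLowerSet (𝒟 : Set (Finset U × Finset V))) :
      #𝒟 ≤ #{y ∈ ({y | #y.1 + #y.2 ≤ w} : Finset (Finset U × Finset (V × κ))) | shadow y ∈ 𝒟} := by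
    rw [filter_filter]
    exact le_of_mul_le_mul_left
      ((two_pow_mul_card_le_sum_card_ballOver_snd U h𝒟 hU hball).trans
        (sum_card_ballOver_snd_le U h𝒟 w)) (Nat.two_pow_pos (Fintype.card U))
  obtain ⟨g, hg, hgB⟩ := exists_injective_of_card_le_card_filter shadow _ hall
  simp only [mem_filter, mem_univ, true_and] at hgB
  refine ⟨sumEquiv.symm ∘ g ∘ sumEquiv,
    sumEquiv.symm.injective.comp (hg.comp sumEquiv.injective), fun x => ⟨?_, ?_⟩⟩
  · simpa [sumEquiv] using (hgB (sumEquiv x)).1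
  · obtain ⟨hleft, hright⟩ := (hgB (sumEquiv x)).2
    rintro (u | ⟨v, c⟩) hr <;> simp only [Function.comp_apply, sumEquiv_symm_apply,
      inl_mem_disjSum, inr_mem_disjSum] at hr
    · simpa [sumEquiv] using hleft hr
    · simpa [sumEquiv] using hright (mem_image_of_mem Prod.fst hr)

theorem IsSetDominationMap.restrict {L' R' : Type*} {π' : R' → L'}
    (hf : IsSetDominationMap π w f) (ι : L' ↪ L) (ρ : R' ↪ R)
    (hcomm : ∀ r', π (ρ r') = ι (π' r')) (hfull : ∀ r l', π r = ι l' → r ∈ Set.range ρ) :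
    IsSetDominationMap π' w fun x => (f (x.map ι)).preimage ρ ρ.injective.injOn := by
  have map_preimage (x : Finset L') :
      ((f (x.map ι)).preimage ρ ρ.injective.injOn).map ρ = f (x.map ι) := by
    ext r
    simp only [mem_map, mem_preimage]
    refine ⟨fun ⟨_, hr', h⟩ => h ▸ hr', fun hr => ?_⟩
    obtain ⟨l', -, hl'⟩ := mem_map.1 ((hf.2 _).2 r hr)
    obtain ⟨r', rfl⟩ := hfull r l' hl'.symm
    exact ⟨r', hr, rfl⟩
  refine ⟨fun x y hxy => map_injective ι (hf.1 ?_), fun x => ⟨?_, fun r' hr' => ?_⟩⟩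
  · simpa only [map_preimage] using congrArg (map ρ) hxy
  · rw [← card_map ρ, map_preimage]
    exact (hf.2 _).1
  · have := (hf.2 _).2 _ (mem_preimage.1 hr')
    rwa [hcomm, mem_map'] at this

section LowerBound

variable [Fintype R]

theorem IsSetDominationMap.image_powerset_subset [DecidableEq L] [DecidableEq R]
    (hf : IsSetDominationMap π w f) (S : Finset L) :
    S.powerset.image f ⊆ ({r | π r ∈ S} : Finset R).powerset := by
  intro y hy
  obtain ⟨x, hx, rfl⟩ := mem_image.1 hy
  exact mem_powerset.2 fun r hr =>
    mem_filter.2 ⟨mem_univ r, mem_powerset.1 hx ((hf.2 x).2 r hr)⟩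

theorem IsSetDominationMap.card_le_card_filter [DecidableEq L] (hf : IsSetDominationMap π w f)
    (S : Finset L) : #S ≤ #{r | π r ∈ S} := by
  classical
  have := card_le_card (hf.image_powerset_subset S)
  rwa [card_image_of_injective _ hf.1, card_powerset, card_powerset,
    Nat.pow_le_pow_iff_right one_lt_two] at this

theorem IsSetDominationMap.card_filter_le_weight [DecidableEq L] (hf : IsSetDominationMap π w f)
    {S : Finset L} (hS : #{r | π r ∈ S} ≤ #S) : #{r | π r ∈ S} ≤ w := by
  classical
  have image_eq : S.powerset.image f = ({r | π r ∈ S} : Finset R).powerset :=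
    eq_of_subset_of_card_le (hf.image_powerset_subset S) <| by
      rw [card_image_of_injective _ hf.1, card_powerset, card_powerset]
      exact Nat.pow_le_pow_right two_pos hS
  obtain ⟨x, -, hx⟩ := mem_image.1 (image_eq ▸ mem_powerset_self _)
  exact hx ▸ (hf.2 x).1

theorem IsSetDominationMap.two_mul_card_le [Fintype L] (hf : IsSetDominationMap π w f) :
    2 * Fintype.card L ≤ Fintype.card R + w := by
  classical
  let S : Finset L := {i | #{r | π r = i} ≤ 1}
  have fibers_le : #{r | π r ∈ S} ≤ #S := by
    rw [← sum_card_fiberwise_eq_card_filter]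
    simpa using sum_le_card_nsmul S _ 1 fun i hi => (mem_filter.1 hi).2
  have le_fibers_compl : 2 * #Sᶜ ≤ #{r | π r ∈ Sᶜ} := by
    rw [← sum_card_fiberwise_eq_card_filter, mul_comm, ← smul_eq_mul]
    refine card_nsmul_le_sum Sᶜ _ 2 fun i hi => Nat.succ_le_of_lt ?_
    simpa [S] using hi
  have card_right : #{r | π r ∈ S} + #{r | π r ∈ Sᶜ} = Fintype.card R := by
    simpa using card_filter_add_card_filter_not (s := (univ : Finset R)) fun r => π r ∈ S
  have card_left : #S + #Sᶜ = Fintype.card L := card_add_card_compl S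
  have card_S_le : #S ≤ w := (hf.card_le_card_filter S).trans (hf.card_filter_le_weight fibers_le)
  have card_S_le_fibers : #S ≤ #{r | π r ∈ S} := hf.card_le_card_filter S
  omega

end LowerBound

theorem existsDomMap_iff {m n w : ℕ} :
    ExistsDomMap m n w ↔ ∃ (π : Fin n → Fin m) (f : Finset (Fin m) → Finset (Fin n)),
      IsSetDominationMap π w f := by
  constructor
  · rintro ⟨φ, E, hE, hφ, hweight, hdom⟩
    choose π hπ using hE
    refine ⟨π, wordEquivFinset ∘ φ ∘ wordEquivFinset.symm, wordEquivFinset.injective.comp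
      (hφ.comp wordEquivFinset.symm.injective), fun x => ⟨hweight _, fun r hr => ?_⟩⟩
    have hone : φ (wordEquivFinset.symm x) r = true := by simpa [wordEquivFinset] using hr
    by_contra hx
    have hzero := hdom (wordEquivFinset.symm x) _ (hπ r) (by simpa [wordEquivFinset] using hx)
    exact Bool.false_ne_true (hzero.symm.trans hone)
  · rintro ⟨π, f, hf, hdom⟩
    refine ⟨wordEquivFinset.symm ∘ f ∘ wordEquivFinset, univ.image fun j => (π j, j),
      fun j => ⟨π j, mem_image_of_mem _ (mem_univ j)⟩, wordEquivFinset.symm.injective.comp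
      (hf.comp wordEquivFinset.injective), fun x => ?_, fun x e he hx => ?_⟩
    · simpa [wordEquivFinset, wt] using (hdom (wordEquivFinset x)).1
    · obtain ⟨j, -, rfl⟩ := mem_image.1 he
      have := mt ((hdom (wordEquivFinset x)).2 j) (by simpa [wordEquivFinset] using hx)
      simpa [wordEquivFinset] using this

end Domination

section Counting

theorem three_mul_choose_le_choose_succ {w : ℕ} (hw : 3 ≤ w) :
    3 * (5 * w).choose w ≤ (5 * w).choose (w + 1) := by
  refine Nat.le_of_mul_le_mul_right ?_ w.succ_pos
  calc 3 * (5 * w).choose w * (w + 1) = (5 * w).choose w * (3 * (w + 1)) := by ring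
    _ ≤ (5 * w).choose w * (5 * w - w) := Nat.mul_le_mul_left _ (by omega)
    _ = (5 * w).choose (w + 1) * (w + 1) := (Nat.choose_succ_right_eq _ _).symm

theorem choose_succ_add_mul_choose_le (n k j : ℕ) :
    n.choose (k + 1) + j * n.choose k ≤ (n + j).choose (k + 1) := by
  induction j with
  | zero => simp
  | succ j ih =>
    have mono : n.choose k ≤ (n + j).choose k := Nat.choose_le_choose k (n.le_add_right j)
    rw [← add_assoc, Nat.choose_succ_succ]
    linarith

theorem eight_pow_le_choose {w : ℕ} (hw : 4 ≤ w) : 8 ^ w ≤ (5 * w).choose w := by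
  induction w, hw using Nat.le_induction with
  | base => decide
  | succ w hw ih =>
    calc 8 ^ (w + 1) = 8 * 8 ^ w := pow_succ' 8 w
      _ ≤ 8 * (5 * w).choose w := Nat.mul_le_mul_left 8 ih
      _ = 3 * (5 * w).choose w + 5 * (5 * w).choose w := by ring
      _ ≤ (5 * w).choose (w + 1) + 5 * (5 * w).choose w :=
        Nat.add_le_add_right (three_mul_choose_le_choose_succ (by omega)) _
      _ ≤ (5 * (w + 1)).choose (w + 1) := choose_succ_add_mul_choose_le (5 * w) w 5

theorem card_filter_card_le_eq_sum_choose {α : Type*} [Fintype α] (w : ℕ) :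
    #{y : Finset α | #y ≤ w} = ∑ i ∈ Iic w, (Fintype.card α).choose i := by
  rw [card_eq_sum_card_fiberwise (f := card) (t := Iic w) fun y hy => by simpa using hy]
  refine sum_congr rfl fun i hi => ?_
  rw [filter_filter, ← card_univ (α := α), ← card_powersetCard, ← univ_filter_card_eq]
  congr! 3 with y
  exact ⟨And.right, fun hy => ⟨hy.trans_le (mem_Iic.1 hi), hy⟩⟩

theorem eight_pow_le_card_filter_card_le {α : Type*} [Fintype α] {w : ℕ}
    (hα : Fintype.card α = 5 * w) (hw : 3 ≤ w) : 8 ^ w ≤ #{y : Finset α | #y ≤ w} := by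
  rw [card_filter_card_le_eq_sum_choose, hα]
  obtain rfl | hw := hw.eq_or_lt
  · decide
  · exact (eight_pow_le_choose hw).trans
      (single_le_sum (fun _ _ => Nat.zero_le _) (mem_Iic.2 le_rfl))

end Counting

theorem exists_isSetDominationMap_sumMap_of_card_le {w k : ℕ} (hw : 3 ≤ w) (hk : k ≤ 2 * w) :
    ∃ f, IsSetDominationMap (Sum.map id Prod.fst : Fin w ⊕ Fin k × Bool → Fin w ⊕ Fin k) w f := by
  have hball : 2 ^ (Fintype.card (Fin w) + Fintype.card (Fin (2 * w))) ≤
      #{y : Finset (Fin w ⊕ Fin (2 * w) × Bool) | #y ≤ w} :=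
    calc _ = 8 ^ w := by
          rw [Fintype.card_fin, Fintype.card_fin, show w + 2 * w = 3 * w by ring, pow_mul]
          norm_num
      _ ≤ _ := by
          refine eight_pow_le_card_filter_card_le ?_ hw
          simp only [Fintype.card_sum, Fintype.card_prod, Fintype.card_fin, Fintype.card_bool]
          ring
  obtain ⟨f, hf⟩ := exists_isSetDominationMap_sumMap (Fintype.card_fin w).le hball
  refine ⟨_, hf.restrict ((Function.Embedding.refl _).sumMap (Fin.castLEEmb hk))
    ((Function.Embedding.refl _).sumMap ((Fin.castLEEmb hk).prodMap (.refl _))) ?_ ?_⟩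
  · rintro (u | ⟨v, c⟩) <;> rfl
  · rintro (u | ⟨v, c⟩) (u' | v') h
    · exact ⟨.inl u, rfl⟩
    · cases h
    · cases h
    · obtain rfl : v = Fin.castLEEmb hk v' := Sum.inr_injective h
      exact ⟨.inr (v', c), rfl⟩

theorem existsDomMap_two_mul_sub {m w : ℕ} (hw : 3 ≤ w) (h1 : w ≤ m) (h2 : m ≤ 3 * w) :
    ExistsDomMap m (2 * m - w) w := by
  obtain ⟨k, rfl⟩ := Nat.exists_eq_add_of_le h1
  obtain ⟨f, hf⟩ := exists_isSetDominationMap_sumMap_of_card_le hw (k := k) (by omega)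
  let leftEquiv : Fin (w + k) ≃ Fin w ⊕ Fin k := Fintype.equivOfCardEq (by simp)
  let rightEquiv : Fin (2 * (w + k) - w) ≃ Fin w ⊕ Fin k × Bool :=
    Fintype.equivOfCardEq <| by
      simp only [Fintype.card_sum, Fintype.card_prod, Fintype.card_fin, Fintype.card_bool]
      omega
  exact existsDomMap_iff.2 ⟨leftEquiv.symm ∘ Sum.map id Prod.fst ∘ rightEquiv, _,
    hf.restrict leftEquiv.toEmbedding rightEquiv.toEmbedding (by simp)
      fun r _ _ => rightEquiv.surjective r⟩

theorem two_mul_sub_le_of_existsDomMap {m n w : ℕ} (h : ExistsDomMap m n w) : 2 * m - w ≤ n := by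
  obtain ⟨π, f, hf⟩ := existsDomMap_iff.1 h
  have := hf.two_mul_card_le
  rw [Fintype.card_fin, Fintype.card_fin] at this
  omega

/-- For w ≥ 3 and w ≤ m ≤ 3w, ν(m,w) = 2m - w, where ν(m,w) is the minimum n for
which an (m,n,w)-domination mapping exists. -/
theorem stmt_9 (m w : ℕ) (hw : 3 ≤ w) (h1 : w ≤ m) (h2 : m ≤ 3 * w) :
    sInf {n : ℕ | ExistsDomMap m n w} = 2 * m - w := by
  have attained : ExistsDomMap m (2 * m - w) w := existsDomMap_two_mul_sub hw h1 h2
  exact le_antisymm (Nat.sInf_le attained)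
    (le_csInf ⟨_, attained⟩ fun _ h => two_mul_sub_le_of_existsDomMap h)
end

section
/- For every w ≥ 1, there exists a constant m_0(w) with the following property: for all m ≥ m_0(w) and all n, if Σ_{j=0}^{w} C(n,j) ≥ 2^m (i.e., |B(n,w)| ≥ 2^m), then an (m,n,w)-domination mapping exists. -/
/-!
Replace words by their supports and attach right vertex `j` to the left vertex `g j`, where
`g j = j % m`. By Hall's theorem it is enough that every down-set `D` of subsets of `[m]` has at
most as many members as there are words of weight at most `w` whose support `g` maps into `D`.

If `D` contains no `w`-set, a section of `g` suffices, and if it contains every set of size at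
most `w`, the bound is the hypothesis `2 ^ m ≤ |B(n,w)|`. Otherwise compare both sides through the
probability that a random permutation of `[m]` carries a given set into `D`; it depends only on
the size of the set and decreases with it. Let `a` and `v` be its values at sizes `w` and `2w`.
Almost all subsets of `[m]` have more than `2w` elements, so `D` has density at most about `v` in
the cube. On the first `m * (n / m)` coordinates, where `g` is a projection with equal fibres, the
words counted have density at least `a` in a ball of size not much below `2 ^ m`. Since `D`
contains a `w`-set and misses a set of size at most `w`, some `2w`-set outside `D` contains a
`w`-set in `D`, which gives `a - v ≥ m ^ (-2w)`. This outweighs both errors, as they are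
exponentially small in `m`.
-/

open Finset Filter Function Equiv
open scoped Nat Pointwise

/-! ### Sizes of Hamming balls -/

/-- The size `|B(n,w)|` of the Hamming ball of radius `w`. -/
def ballCard (n w : ℕ) : ℕ := ∑ j ∈ range (w + 1), n.choose j

/-- The Hamming ball of radius `w` over the coordinate set `α`, each word being represented by its
support. -/
def hammingBall (α : Type*) [Fintype α] (w : ℕ) : Finset (Finset α) := {y | #y ≤ w}

lemma mem_hammingBall {α : Type*} [Fintype α] {w : ℕ} {y : Finset α} :
    y ∈ hammingBall α w ↔ #y ≤ w := by
  simp only [hammingBall, mem_filter_univ]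

lemma exists_mem_card_eq_of_not_subset_hammingBall {α : Type*} [Fintype α] {w : ℕ}
    {D : Finset (Finset α)} (hD : IsLowerSet (D : Set (Finset α))) (h : ¬ D ⊆ hammingBall α w) :
    ∃ A ∈ D, #A = w := by
  obtain ⟨T, hTD, hT⟩ := not_subset.1 h
  rw [mem_hammingBall, not_le] at hT
  obtain ⟨A, hAT, hA⟩ := exists_subset_card_eq hT.le
  exact ⟨A, hD hAT hTD, hA⟩

lemma card_hammingBall (α : Type*) [Fintype α] (w : ℕ) :
    #(hammingBall α w) = ballCard (Fintype.card α) w := by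
  have hmaps : Set.MapsTo card (hammingBall α w : Set (Finset α)) (range (w + 1)) :=
    fun y hy ↦ mem_range.2 (Nat.lt_succ_of_le (mem_hammingBall.1 hy))
  rw [ballCard, card_eq_sum_card_fiberwise hmaps]
  refine sum_congr rfl fun j hj ↦ ?_
  rw [← card_univ, ← card_powersetCard]
  congr 1
  ext y
  rw [mem_filter, mem_hammingBall, mem_powersetCard_univ]
  have := mem_range.1 hj
  omega

lemma ballCard_mono_left (w : ℕ) : Monotone (ballCard · w) :=
  fun _ _ h ↦ sum_le_sum fun j _ ↦ Nat.choose_le_choose j h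

lemma ballCard_le_pow (n w : ℕ) : ballCard n w ≤ (n + 1) ^ w := by
  rw [add_pow]
  refine sum_le_sum fun j hj ↦ ?_
  have hpos : 0 < w.choose j := Nat.choose_pos (mem_range_succ_iff.1 hj)
  calc n.choose j ≤ n ^ j := Nat.choose_le_pow n j
    _ ≤ n ^ j * w.choose j := Nat.le_mul_of_pos_right _ hpos
    _ = n ^ j * 1 ^ (w - j) * w.choose j := by rw [one_pow, mul_one]

lemma mul_choose_succ_le (a j : ℕ) :
    a * (a + 1).choose j ≤ a * a.choose j + j * (a + 1).choose j := by
  cases j with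
  | zero => simp
  | succ j =>
    have absorption := Nat.add_one_mul_choose_eq a j
    rw [Nat.choose_succ_succ] at absorption ⊢
    linarith

lemma mul_ballCard_succ_le (a w : ℕ) :
    a * ballCard (a + 1) w ≤ a * ballCard a w + w * ballCard (a + 1) w := by
  simp only [ballCard, mul_sum, ← sum_add_distrib]
  refine sum_le_sum fun j hj ↦ (mul_choose_succ_le a j).trans ?_
  gcongr
  exact mem_range_succ_iff.1 hj

lemma mul_ballCard_add_le (a r w : ℕ) :
    a * ballCard (a + r) w ≤ a * ballCard a w + r * w * ballCard (a + r) w := by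
  induction r with
  | zero => simp
  | succ r ih =>
    have hmono : ballCard (a + r) w ≤ ballCard (a + r + 1) w :=
      ballCard_mono_left w (Nat.le_succ _)
    have hstep := mul_ballCard_succ_le (a + r) w
    have hmul := Nat.mul_le_mul_left (r * w) hmono
    have hmul' := Nat.mul_le_mul_left r hmono
    rw [← add_assoc]
    linarith

lemma div_mul_ballCard_le {m : ℕ} (hm : 0 < m) (n w : ℕ) :
    n / m * ballCard n w ≤ n / m * ballCard (n / m * m) w + w * ballCard n w := by
  have h := mul_ballCard_add_le (n / m * m) (n % m) w
  rw [Nat.div_add_mod'] at h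
  refine Nat.le_of_mul_le_mul_left ?_ hm
  calc m * (n / m * ballCard n w) = n / m * m * ballCard n w := by ring
    _ ≤ n / m * m * ballCard (n / m * m) w + n % m * w * ballCard n w := h
    _ ≤ n / m * m * ballCard (n / m * m) w + m * w * ballCard n w := by
      gcongr
      exact (Nat.mod_lt n hm).le
    _ = m * (n / m * ballCard (n / m * m) w + w * ballCard n w) := by ring

lemma two_mul_tsub_ballCard_mul_le {m n w K X : ℕ} (hm : 0 < m) (hw : 0 < w)
    (hX : X ≤ ballCard n w) (hK : 2 * w * K ≤ n / m) :
    2 * ((X - ballCard (n / m * m) w) * K) ≤ X := by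
  have hball := div_mul_ballCard_le hm n w
  set B := ballCard (n / m * m) w
  obtain hK0 | hKpos := K.eq_zero_or_pos
  · simp [hK0]
  have hwq : w ≤ n / m := by nlinarith
  obtain ⟨d, hd⟩ := Nat.exists_eq_add_of_le hwq
  have hdX : d * X ≤ (w + d) * B := by
    rw [hd] at hball
    have := Nat.mul_le_mul_left d hX
    linarith
  have hdef : n / m * (X - B) ≤ w * X := by
    rw [hd, Nat.mul_sub, tsub_le_iff_right]
    linarith
  refine Nat.le_of_mul_le_mul_left ?_ hw
  calc w * (2 * ((X - B) * K)) = 2 * w * K * (X - B) := by ring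
    _ ≤ n / m * (X - B) := by gcongr
    _ ≤ w * X := hdef

/-! ### Asymptotics -/

lemma eventually_mul_pow_lt_two_pow (c k : ℕ) : ∀ᶠ m : ℕ in atTop, c * m ^ k < 2 ^ m := by
  have hlittle := (isLittleO_pow_const_const_pow_of_one_lt (R := ℝ) k one_lt_two).const_mul_left c
  filter_upwards [hlittle.def one_half_pos] with m hm
  have hpos : (0 : ℝ) < 2 ^ m := by positivity
  rw [Real.norm_of_nonneg (by positivity), Real.norm_of_nonneg hpos.le] at hm
  have : (c : ℝ) * m ^ k < 2 ^ m := by linarith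
  exact_mod_cast this

lemma eventually_ballCard_mul_pow_le (k : ℕ) :
    ∀ᶠ m : ℕ in atTop, 2 * (ballCard m k * m ^ k) ≤ 2 ^ m := by
  filter_upwards [eventually_mul_pow_lt_two_pow (2 * 2 ^ k) (2 * k), eventually_ge_atTop 1]
    with m hlt hm
  calc 2 * (ballCard m k * m ^ k) ≤ 2 * ((m + 1) ^ k * m ^ k) := by
        gcongr
        exact ballCard_le_pow m k
    _ ≤ 2 * ((2 * m) ^ k * m ^ k) := by gcongr; omega
    _ = 2 * 2 ^ k * m ^ (2 * k) := by rw [mul_pow, two_mul k, pow_add]; ring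
    _ ≤ 2 ^ m := hlt.le

lemma eventually_mul_pow_lt_div (c k w : ℕ) :
    ∀ᶠ m : ℕ in atTop, ∀ n, 2 ^ m ≤ ballCard n w → c * m ^ k < n / m := by
  filter_upwards [eventually_mul_pow_lt_two_pow ((c + 1) ^ w) ((k + 1) * w),
    eventually_ge_atTop 1] with m hlt hm n hn
  by_contra! hle
  have hnm : n < (c * m ^ k + 1) * m := (Nat.div_lt_iff_lt_mul hm).1 (Nat.lt_succ_of_le hle)
  have hsucc : n + 1 ≤ (c + 1) * m ^ (k + 1) :=
    calc n + 1 ≤ (c * m ^ k + 1) * m := hnm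
      _ ≤ (c * m ^ k + m ^ k) * m := by gcongr; exact Nat.one_le_pow _ _ hm
      _ = (c + 1) * m ^ (k + 1) := by ring
  have : 2 ^ m ≤ (c + 1) ^ w * m ^ ((k + 1) * w) :=
    calc 2 ^ m ≤ (n + 1) ^ w := hn.trans (ballCard_le_pow n w)
      _ ≤ ((c + 1) * m ^ (k + 1)) ^ w := by gcongr
      _ = (c + 1) ^ w * m ^ ((k + 1) * w) := by rw [mul_pow, pow_mul]
  exact hlt.not_ge this

lemma eventually_ballCard_add_tsub_mul_pow_le {w : ℕ} (hw : 0 < w) :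
    ∀ᶠ m : ℕ in atTop, ∀ n, 2 ^ m ≤ ballCard n w →
      (ballCard m (2 * w) + (2 ^ m - ballCard (n / m * m) w)) * m ^ (2 * w) ≤ 2 ^ m := by
  filter_upwards [eventually_ballCard_mul_pow_le (2 * w),
    eventually_mul_pow_lt_div (2 * w) (2 * w) w, eventually_gt_atTop 0] with m hsmall hdiv hm n hn
  have hdef := two_mul_tsub_ballCard_mul_le hm hw hn (hdiv n hn).le
  linarith

/-! ### Permutations carrying a set into a family -/

section PermCount

variable {α : Type*} [DecidableEq α] {A V : Finset α}

lemma smul_eq_self_of_fixing {σ : Perm α} (hσ : ∀ a ∈ V, σ a = a) (hAV : A ⊆ V) : σ • A = A :=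
  (image_congr fun _ ha ↦ hσ _ (hAV ha)).trans image_id

variable [Fintype α]

/-- The number of permutations of `α` carrying `A` into the family `D`. Divided by `(card α)!`, it
is the density of `D` among the sets of size `#A`. -/
def permCount (D : Finset (Finset α)) (A : Finset α) : ℕ := #{σ : Perm α | σ • A ∈ D}

variable {D : Finset (Finset α)}

lemma permCount_le_factorial (D : Finset (Finset α)) (A : Finset α) :
    permCount D A ≤ (Fintype.card α)! :=
  (card_le_univ _).trans_eq Fintype.card_perm

lemma permCount_eq_of_card_eq (D : Finset (Finset α)) (h : #A = #V) :
    permCount D A = permCount D V := by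
  obtain ⟨τ, hτ⟩ := (Set.powersetCard.isPretransitive (α := α) (n := #V)).exists_smul_eq
    ⟨A, h⟩ ⟨V, rfl⟩
  obtain rfl : τ • A = V := congrArg Subtype.val hτ
  refine (card_equiv (Equiv.mulRight τ) fun σ ↦ ?_).symm
  simp only [mem_filter_univ, Equiv.coe_mulRight, mul_smul]

lemma permCount_antitone (hD : IsLowerSet (D : Set (Finset α))) : Antitone (permCount D) :=
  fun _ _ h ↦ card_le_card <| monotone_filter_right _ fun _ _ hσ ↦
    hD (smul_finset_subset_smul_finset h) hσ

lemma permCount_le_of_card_le (hD : IsLowerSet (D : Set (Finset α))) (h : #A ≤ #V) :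
    permCount D V ≤ permCount D A := by
  obtain ⟨C, hCV, hC⟩ := exists_subset_card_eq h
  exact (permCount_antitone hD hCV).trans_eq (permCount_eq_of_card_eq D hC)

lemma card_perm_fixing (V : Finset α) :
    #{σ : Perm α | ∀ a ∈ V, σ a = a} = (Fintype.card α - #V)! := by
  rw [← Fintype.card_subtype, ← card_compl, ← Fintype.card_coe, ← Fintype.card_perm]
  refine (Fintype.card_congr ((Perm.subtypeEquivSubtypePerm (· ∈ Vᶜ)).trans ?_)).symm
  exact Equiv.subtypeEquivRight fun σ ↦ by simp only [mem_compl, not_not]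

-- The permutations fixing `V` pointwise carry `A` into `D` but not `V`.
lemma permCount_add_factorial_le (hD : IsLowerSet (D : Set (Finset α)))
    (hA : A ∈ D) (hV : V ∉ D) (hAV : A ⊆ V) :
    permCount D V + (Fintype.card α - #V)! ≤ permCount D A := by
  rw [← card_perm_fixing, permCount, ← card_union_of_disjoint]
  · refine card_le_card (union_subset ?_ fun σ hσ ↦ ?_)
    · exact monotone_filter_right _ fun σ _ hσ ↦ hD (smul_finset_subset_smul_finset hAV) hσ
    · rw [mem_filter_univ] at hσ ⊢
      rwa [smul_eq_self_of_fixing hσ hAV]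
  · refine disjoint_filter.2 fun σ _ hσV hσ ↦ hV ?_
    rwa [smul_eq_self_of_fixing hσ Subset.rfl] at hσV

lemma sum_permCount {β : Type*} (D : Finset (Finset α)) {s : Finset β} {f : β → Finset α}
    (e : Perm α → Perm β) (hs : ∀ σ y, y ∈ s ↔ e σ y ∈ s) (hf : ∀ σ y, f (e σ y) = σ • f y) :
    ∑ y ∈ s, permCount D (f y) = (Fintype.card α)! * #{y ∈ s | f y ∈ D} := by
  have hcard (σ : Perm α) : #{y ∈ s | σ • f y ∈ D} = #{y ∈ s | f y ∈ D} :=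
    card_equiv (e σ) fun y ↦ by simp only [mem_filter, hf, ← hs]
  calc ∑ y ∈ s, permCount D (f y) = ∑ σ : Perm α, #{y ∈ s | σ • f y ∈ D} :=
        sum_card_bipartiteAbove_eq_sum_card_bipartiteBelow fun y σ ↦ σ • f y ∈ D
    _ = (Fintype.card α)! * #{y ∈ s | f y ∈ D} := by
      simp only [hcard, sum_const, card_univ, Fintype.card_perm, smul_eq_mul]

lemma factorial_mul_card_le_add_permCount (hD : IsLowerSet (D : Set (Finset α))) (V : Finset α) :
    (Fintype.card α)! * #D ≤
      #(hammingBall α #V) * (Fintype.card α)! + 2 ^ Fintype.card α * permCount D V := by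
  have hsum := sum_permCount D (s := univ) (f := id) (fun σ ↦ MulAction.toPerm σ)
    (fun _ _ ↦ by simp only [mem_univ]) (fun _ _ ↦ rfl)
  simp only [id_eq, filter_univ_mem] at hsum
  calc (Fintype.card α)! * #D = ∑ T, permCount D T := hsum.symm
    _ = ∑ T ∈ hammingBall α #V, permCount D T + ∑ T ∈ (hammingBall α #V)ᶜ, permCount D T :=
      (sum_add_sum_compl _ _).symm
    _ ≤ #(hammingBall α #V) * (Fintype.card α)! + #(hammingBall α #V)ᶜ * permCount D V := by
      refine add_le_add (sum_le_card_nsmul _ _ _ fun T _ ↦ permCount_le_factorial D T)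
        (sum_le_card_nsmul _ _ _ fun T hT ↦ permCount_le_of_card_le hD ?_)
      rw [mem_compl, mem_hammingBall, not_le] at hT
      exact hT.le
    _ ≤ #(hammingBall α #V) * (Fintype.card α)! + 2 ^ Fintype.card α * permCount D V := by
      gcongr
      exact (card_le_univ _).trans_eq Fintype.card_finset

end PermCount

/-! ### Words whose projected support lies in a down-set -/

section WordsOver

variable {α γ : Type*} [DecidableEq α] [Fintype γ]

/-- The words of weight at most `w` on `γ` whose support is mapped by `g` to a member of `D`. When
`g` sends each right vertex to its neighbour and `D` is a down-set, these are the words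
dominated by some member of `D`. -/
def wordsOver (g : γ → α) (w : ℕ) (D : Finset (Finset α)) : Finset (Finset γ) :=
  {y ∈ hammingBall γ w | y.image g ∈ D}

variable {g : γ → α} {w : ℕ} {D : Finset (Finset α)}

lemma mem_wordsOver {y : Finset γ} : y ∈ wordsOver g w D ↔ #y ≤ w ∧ y.image g ∈ D := by
  rw [wordsOver, mem_filter, mem_hammingBall]

lemma card_wordsOver_le_of_embedding {δ : Type*} [Fintype δ] {f : δ → α} (ι : δ ↪ γ)
    (hι : ∀ p, g (ι p) = f p) : #(wordsOver f w D) ≤ #(wordsOver g w D) := by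
  refine card_le_card_of_injOn (Finset.map ι) (fun y hy ↦ ?_) (map_injective ι).injOn
  have himage : (y.map ι).image g = y.image f := by
    classical
    rw [map_eq_image, image_image]
    exact image_congr fun p _ ↦ hι p
  simpa only [mem_coe, mem_wordsOver, card_map, himage] using hy

lemma exists_injective_of_card_le_card_wordsOver
    (h : ∀ D : Finset (Finset α), IsLowerSet (D : Set (Finset α)) → #D ≤ #(wordsOver g w D)) :
    ∃ f : Finset α → Finset γ, Injective f ∧ ∀ x, #(f x) ≤ w ∧ (f x).image g ⊆ x := by
  classical
  suffices hall : ∀ s : Finset (Finset α), #s ≤ #(s.biUnion fun x ↦ wordsOver g w x.powerset) by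
    simpa only [mem_wordsOver, mem_powerset] using
      (all_card_le_biUnion_card_iff_exists_injective _).1 hall
  intro s
  have hlower : IsLowerSet (s.biUnion powerset : Set (Finset α)) := by
    intro A B hBA hA
    simp only [mem_coe, mem_biUnion, mem_powerset] at hA ⊢
    exact hA.imp fun x hx ↦ ⟨hx.1, hBA.trans hx.2⟩
  have hunion : s.biUnion (fun x ↦ wordsOver g w x.powerset) =
      wordsOver g w (s.biUnion powerset) := by
    ext y
    simp only [mem_biUnion, mem_wordsOver]
    tauto
  calc #s ≤ #(s.biUnion powerset) :=
        card_le_card fun x hx ↦ mem_biUnion.2 ⟨x, hx, mem_powerset_self x⟩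
    _ ≤ #(wordsOver g w (s.biUnion powerset)) := h _ hlower
    _ = #(s.biUnion fun x ↦ wordsOver g w x.powerset) := by rw [hunion]

variable [Fintype α]

lemma card_le_card_wordsOver_of_subset (hg : Surjective g) (hD : D ⊆ hammingBall α w) :
    #D ≤ #(wordsOver g w D) :=
  calc #D = #(wordsOver id w D) := by
        congr 1
        ext A
        rw [mem_wordsOver, image_id, iff_and_self]
        exact fun hA ↦ mem_hammingBall.1 (hD hA)
    _ ≤ #(wordsOver g w D) :=
      card_wordsOver_le_of_embedding ⟨surjInv hg, injective_surjInv hg⟩ (surjInv_eq hg)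

lemma wordsOver_eq_hammingBall (hD : hammingBall α w ⊆ D) : wordsOver g w D = hammingBall γ w :=
  filter_true_of_mem fun _ hy ↦
    hD (mem_hammingBall.2 (card_image_le.trans (mem_hammingBall.1 hy)))

variable {Q : Type*} [Fintype Q]

lemma card_hammingBall_mul_permCount_le (hD : IsLowerSet (D : Set (Finset α)))
    {A : Finset α} (hA : w ≤ #A) :
    #(hammingBall (Q × α) w) * permCount D A ≤
      (Fintype.card α)! * #(wordsOver (Prod.snd : Q × α → α) w D) := by
  classical
  have hsum := sum_permCount D (s := hammingBall (Q × α) w) (f := image Prod.snd)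
    (fun σ ↦ (Equiv.prodCongr (Equiv.refl Q) σ).finsetCongr)
    (fun _ _ ↦ by simp only [mem_hammingBall, finsetCongr_apply, card_map])
    (fun σ y ↦ by
      simp only [finsetCongr_apply, map_eq_image, smul_finset_def, image_image]
      rfl)
  rw [wordsOver, ← hsum]
  refine card_nsmul_le_sum _ _ _ fun y hy ↦ permCount_le_of_card_le hD ?_
  exact card_image_le.trans ((mem_hammingBall.1 hy).trans hA)

lemma card_le_card_wordsOver_snd (hα : 2 * w ≤ Fintype.card α)
    (herror : (#(hammingBall α (2 * w)) + (2 ^ Fintype.card α - #(hammingBall (Q × α) w))) *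
      (Fintype.card α).descFactorial (2 * w) ≤ 2 ^ Fintype.card α)
    (hD : IsLowerSet (D : Set (Finset α))) {A W : Finset α}
    (hA : A ∈ D) (hAw : #A = w) (hW : W ∉ D) (hWw : #W ≤ w) :
    #D ≤ #(wordsOver (Prod.snd : Q × α → α) w D) := by
  obtain ⟨V, hAWV, hV⟩ := exists_superset_card_eq (s := A ∪ W) (n := 2 * w)
    ((card_union_le A W).trans (by omega)) hα
  have hVD : V ∉ D := fun h ↦ hW (hD (subset_union_right.trans hAWV) h)
  have hgain := permCount_add_factorial_le hD hA hVD (subset_union_left.trans hAWV)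
  have hcube := factorial_mul_card_le_add_permCount hD V
  have hball := card_hammingBall_mul_permCount_le (Q := Q) hD hAw.ge
  have hle := permCount_le_factorial D A
  have hfact := Nat.factorial_mul_descFactorial hα
  rw [hV] at hgain hcube
  set S := #(hammingBall α (2 * w))
  set B := #(hammingBall (Q × α) w)
  set M := (Fintype.card α)!
  set F := (Fintype.card α - 2 * w)!
  set d := (Fintype.card α).descFactorial (2 * w)
  set X := 2 ^ Fintype.card α
  suffices S * M + X * permCount D V + X * F ≤ B * permCount D A + X * F from
    Nat.le_of_mul_le_mul_left (hcube.trans ((Nat.le_of_add_le_add_right this).trans hball))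
      (Nat.factorial_pos _)
  calc S * M + X * permCount D V + X * F = S * M + X * (permCount D V + F) := by ring
    _ ≤ S * M + (B + (X - B)) * permCount D A := by gcongr; exact le_add_tsub
    _ = S * M + B * permCount D A + (X - B) * permCount D A := by ring
    _ ≤ S * M + B * permCount D A + (X - B) * M := by gcongr
    _ = B * permCount D A + (S + (X - B)) * d * F := by rw [← hfact]; ring
    _ ≤ B * permCount D A + X * F := by gcongr

lemma card_le_card_wordsOver [Nonempty Q] (hα : 2 * w ≤ Fintype.card α)
    (hγ : 2 ^ Fintype.card α ≤ #(hammingBall γ w))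
    (herror : (#(hammingBall α (2 * w)) + (2 ^ Fintype.card α - #(hammingBall (Q × α) w))) *
      (Fintype.card α).descFactorial (2 * w) ≤ 2 ^ Fintype.card α)
    (ι : Q × α ↪ γ) (hι : ∀ p, g (ι p) = p.2) (hD : IsLowerSet (D : Set (Finset α))) :
    #D ≤ #(wordsOver g w D) := by
  by_cases hsmall : D ⊆ hammingBall α w
  · have hg : Surjective g := fun a ↦ ⟨ι (Classical.arbitrary Q, a), hι _⟩
    exact card_le_card_wordsOver_of_subset hg hsmall
  by_cases hlarge : hammingBall α w ⊆ D
  · rw [wordsOver_eq_hammingBall hlarge]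
    exact ((card_le_univ D).trans_eq Fintype.card_finset).trans hγ
  obtain ⟨A, hA, hAw⟩ := exists_mem_card_eq_of_not_subset_hammingBall hD hsmall
  obtain ⟨W, hWw, hW⟩ := not_subset.1 hlarge
  exact (card_le_card_wordsOver_snd hα herror hD hA hAw hW (mem_hammingBall.1 hWw)).trans
    (card_wordsOver_le_of_embedding ι hι)

end WordsOver

/-! ### Domination mappings -/

lemma existsDomMap_of_supports {m n w : ℕ} (g : Fin n → Fin m)
    {f : Finset (Fin m) → Finset (Fin n)} (hf : Injective f)
    (hdom : ∀ x, #(f x) ≤ w ∧ (f x).image g ⊆ x) : ExistsDomMap m n w := by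
  let supp (x : Fin m → Bool) : Finset (Fin m) := {i | x i = true}
  have supp_injective : Injective supp := fun x x' h ↦ funext fun i ↦
    Bool.eq_iff_iff.2 (by simpa only [supp, mem_filter_univ] using Finset.ext_iff.1 h i)
  refine ⟨fun x j ↦ decide (j ∈ f (supp x)), univ.image fun j ↦ (g j, j), ?_, ?_, ?_, ?_⟩
  · exact fun j ↦ ⟨g j, mem_image_of_mem _ (mem_univ j)⟩
  · refine fun x x' h ↦ supp_injective (hf (Finset.ext fun j ↦ ?_))
    exact decide_eq_decide.1 (congrFun h j)
  · intro x
    simpa only [wt, decide_eq_true_eq, filter_univ_mem] using (hdom (supp x)).1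
  · intro x e he hx
    obtain ⟨j, -, rfl⟩ := mem_image.1 he
    refine decide_eq_false fun hj ↦ ?_
    have hgj : x (g j) = true := by
      simpa only [supp, mem_filter_univ] using (hdom (supp x)).2 (mem_image_of_mem g hj)
    exact Bool.false_ne_true (hx.symm.trans hgj)

lemma exists_embedding_mod (n : ℕ) {m : ℕ} [NeZero m] :
    ∃ ι : Fin (n / m) × Fin m ↪ Fin n, ∀ p, Fin.ofNat m (ι p) = p.2 := by
  refine ⟨finProdFinEquiv.toEmbedding.trans (Fin.castLEEmb (Nat.div_mul_le_self n m)),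
    fun p ↦ Fin.ext ?_⟩
  simp [Nat.mod_eq_of_lt p.2.isLt]

/-- For every w ≥ 1 there is a constant m₀(w) such that for all m ≥ m₀(w) and all n,
if |B(n,w)| ≥ 2^m then an (m,n,w)-domination mapping exists. -/
theorem stmt_12 (w : ℕ) (hw : 1 ≤ w) :
    ∃ m₀ : ℕ, ∀ m : ℕ, m₀ ≤ m → ∀ n : ℕ,
      2 ^ m ≤ ∑ j ∈ Finset.range (w + 1), Nat.choose n j →
      ExistsDomMap m n w := by
  obtain ⟨m₀, hm₀⟩ := eventually_atTop.1 <| (eventually_ballCard_add_tsub_mul_pow_le hw).and <|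
    (eventually_mul_pow_lt_div 0 0 w).and <| eventually_ge_atTop (2 * w)
  refine ⟨m₀, fun m hm n (hn : 2 ^ m ≤ ballCard n w) ↦ ?_⟩
  obtain ⟨herror, hdiv, hwm⟩ := hm₀ m hm
  have : NeZero m := ⟨by omega⟩
  have : Nonempty (Fin (n / m)) := ⟨⟨0, (Nat.zero_le _).trans_lt (hdiv n hn)⟩⟩
  have herror' : (ballCard m (2 * w) + (2 ^ m - ballCard (n / m * m) w)) *
      m.descFactorial (2 * w) ≤ 2 ^ m :=
    (Nat.mul_le_mul_left _ (Nat.descFactorial_le_pow m _)).trans (herror n hn)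
  obtain ⟨ι, hι⟩ := exists_embedding_mod n (m := m)
  have hall (D : Finset (Finset (Fin m))) (hD : IsLowerSet (D : Set (Finset (Fin m)))) :
      #D ≤ #(wordsOver (fun j : Fin n ↦ Fin.ofNat m j) w D) :=
    card_le_card_wordsOver (by simpa using hwm) (by simpa [card_hammingBall] using hn)
      (by simpa [card_hammingBall] using herror') ι hι hD
  obtain ⟨f, hf, hdom⟩ := exists_injective_of_card_le_card_wordsOver hall
  exact existsDomMap_of_supports _ hf hdom
end
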